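/- (Unique continuation; local form of Lemma 2.5 of the paper.) Let J be an almost complex structure on a connected open set U ⊆ ℂ² and let α be a closed J-anti-invariant 2-form on U. If α vanishes identically on some nonempty open subset of U, then α vanishes identically on U. -/

import Mathlib

open Complex Metric

/-- An almost complex structure on an open set `U ⊆ ℂ²`. -/
def IsAlmostComplexOn (J : ℂ × ℂ → (ℂ × ℂ →L[ℝ] ℂ × ℂ)) (U : Set (ℂ × ℂ)) : Prop :=
  ContDiffOn ℝ (⊤ : ℕ∞) J U ∧ ∀ x ∈ U, ∀ X : ℂ × ℂ, J x (J x X) = -X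

/-- The open unit disk in `ℂ`. -/
def unitDisk : Set ℂ := ball (0 : ℂ) 1

/-- An embedded `J`-holomorphic disk in `U`. -/
def IsEmbeddedJHolDisk (J : ℂ × ℂ → (ℂ × ℂ →L[ℝ] ℂ × ℂ)) (U : Set (ℂ × ℂ))
    (u : ℂ → ℂ × ℂ) : Prop :=
  ContDiffOn ℝ (⊤ : ℕ∞) u unitDisk ∧ Set.InjOn u unitDisk ∧
    Set.MapsTo u unitDisk U ∧
    (∀ z ∈ unitDisk, Function.Injective (fderiv ℝ u z)) ∧
    ∀ z ∈ unitDisk, ∀ v : ℂ, fderiv ℝ u z (Complex.I * v) = J (u z) (fderiv ℝ u z v)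

/-- A (smooth, alternating) 2-form on an open set `U ⊆ ℂ²`. -/
def IsTwoFormOn (α : ℂ × ℂ → (ℂ × ℂ →L[ℝ] ℂ × ℂ →L[ℝ] ℝ)) (U : Set (ℂ × ℂ)) : Prop :=
  ContDiffOn ℝ (⊤ : ℕ∞) α U ∧ ∀ x ∈ U, ∀ X : ℂ × ℂ, α x X X = 0

/-- `J`-anti-invariance of a 2-form on `U`. -/
def IsJAntiInvariantOn (J : ℂ × ℂ → (ℂ × ℂ →L[ℝ] ℂ × ℂ))
    (α : ℂ × ℂ → (ℂ × ℂ →L[ℝ] ℂ × ℂ →L[ℝ] ℝ)) (U : Set (ℂ × ℂ)) : Prop :=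
  ∀ x ∈ U, ∀ X Y : ℂ × ℂ, α x (J x X) (J x Y) = -α x X Y

/-- Closedness of a 2-form on `U`. -/
def IsClosedTwoFormOn (α : ℂ × ℂ → (ℂ × ℂ →L[ℝ] ℂ × ℂ →L[ℝ] ℝ))
    (U : Set (ℂ × ℂ)) : Prop :=
  ∀ x ∈ U, ∀ X Y Z : ℂ × ℂ,
    fderiv ℝ α x X Y Z - fderiv ℝ α x Y X Z + fderiv ℝ α x Z X Y = 0

/-!
The complex-valued form `Φ = α - i α(J·, ·)` satisfies `‖∂̄Φ‖ ≤ C ‖Φ‖` locally, where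
`∂̄f = df + i df ∘ J`: closedness of `α`, combined with the derivatives of the algebraic
identities relating `α` and `J`, expresses `∂̄Φ` through `α` and the derivative of `J`, without
derivatives of `α`.

Functions with `‖∂̄f‖ ≤ C ‖f‖` have unique continuation by Carleman's method. Since
`⟪df, i df⟫` is a null Lagrangian, conjugating `∂̄` by a weight `exp φ` and integrating by parts
leaves only lower order terms, among which the one carrying the second derivatives of `φ` has a
large positive coefficient when `φ = l exp(s ψ)`. The resulting inequality, as `l → ∞`,
propagates the vanishing of `f` across level sets of any `ψ` without critical points; taking `ψ`
radial moves it from a point to a ball of uniform size, and connectedness does the rest.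
-/

open Filter Function MeasureTheory Module Set
open scoped ContDiff RealInnerProductSpace Topology

section Divergence

variable {E : Type*} [NormedAddCommGroup E] [NormedSpace ℝ E]

/-- The divergence of a vector field on a finite-dimensional space, relative to any Haar measure;
as a trace it requires no choice of coordinates. -/
noncomputable def divergence (T : E → E) (x : E) : ℝ :=
  LinearMap.trace ℝ E (fderiv ℝ T x)

lemma divergence_const (X x : E) : divergence (fun _ ↦ X) x = 0 := by
  simp [divergence]

lemma divergence_sub {S T : E → E} {x : E} (hS : DifferentiableAt ℝ S x)
    (hT : DifferentiableAt ℝ T x) :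
    divergence (fun y ↦ S y - T y) x = divergence S x - divergence T x := by
  simp [divergence, fderiv_fun_sub hS hT]

lemma divergence_sum {ι : Type*} (s : Finset ι) {T : ι → E → E} {x : E}
    (hT : ∀ i ∈ s, DifferentiableAt ℝ (T i) x) :
    divergence (fun y ↦ ∑ i ∈ s, T i y) x = ∑ i ∈ s, divergence (T i) x := by
  simp [divergence, fderiv_fun_sum hT]

variable [FiniteDimensional ℝ E]

lemma divergence_smul {u : E → ℝ} {T : E → E} {x : E} (hu : DifferentiableAt ℝ u x)
    (hT : DifferentiableAt ℝ T x) :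
    divergence (fun y ↦ u y • T y) x = fderiv ℝ u x (T x) + u x * divergence T x := by
  simp [divergence, fderiv_fun_smul hu hT, add_comm]

lemma continuous_divergence {T : E → E} (hT : ContDiff ℝ 1 T) : Continuous (divergence T) := by
  have trace_continuous : Continuous
      ((LinearMap.trace ℝ E).comp (ContinuousLinearMap.coeLM ℝ : (E →L[ℝ] E) →ₗ[ℝ] E →ₗ[ℝ] E)) :=
    LinearMap.continuous_of_finiteDimensional _
  exact trace_continuous.comp (hT.continuous_fderiv one_ne_zero)

variable [MeasurableSpace E] [BorelSpace E]

lemma integral_fderiv_apply_eq_zero (μ : Measure E) [μ.IsAddHaarMeasure] {u : E → ℝ}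
    (hu : ContDiff ℝ 1 u) (hc : HasCompactSupport u) (v : E) : ∫ x, fderiv ℝ u x v ∂μ = 0 := by
  have hderiv : Integrable (fun x ↦ fderiv ℝ u x v) μ :=
    ((hu.continuous_fderiv one_ne_zero).clm_apply
      continuous_const).integrable_of_hasCompactSupport (hc.fderiv_apply ℝ v)
  simpa using integral_mul_fderiv_eq_neg_fderiv_mul_of_integrable (μ := μ) (𝕜 := ℝ)
    (f := fun _ ↦ (1 : ℝ)) (g := u) (v := v) (by simp) (by simpa using hderiv)
    (by simpa using hu.continuous.integrable_of_hasCompactSupport hc)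
    (fun x _ ↦ differentiableAt_const 1) (fun x _ ↦ hu.differentiable one_ne_zero x)

lemma integral_divergence_eq_zero (μ : Measure E) [μ.IsAddHaarMeasure] {T : E → E}
    (hT : ContDiff ℝ 1 T) (hc : HasCompactSupport T) : ∫ x, divergence T x ∂μ = 0 := by
  let b := finBasis ℝ E
  let coord := fun i ↦ LinearMap.toContinuousLinearMap (b.coord i)
  have hcoord : ∀ i, ContDiff ℝ 1 fun x ↦ coord i (T x) := fun i ↦ (coord i).contDiff.comp hT
  have hsupp : ∀ i, HasCompactSupport fun x ↦ coord i (T x) := fun i ↦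
    hc.comp_left (map_zero (coord i))
  have hdiv : ∀ x, divergence T x = ∑ i, fderiv ℝ (fun y ↦ coord i (T y)) x (b i) := fun x ↦ by
    have hd : ∀ i, fderiv ℝ (fun y ↦ coord i (T y)) x = (coord i).comp (fderiv ℝ T x) := fun i ↦
      ((coord i).hasFDerivAt.comp x (hT.differentiable one_ne_zero x).hasFDerivAt).fderiv
    simp only [hd]
    simp [divergence, LinearMap.trace_eq_matrix_trace ℝ b, Matrix.trace, LinearMap.toMatrix_apply,
      coord]
  have hint : ∀ i, Integrable (fun x ↦ fderiv ℝ (fun y ↦ coord i (T y)) x (b i)) μ := fun i ↦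
    (((hcoord i).continuous_fderiv one_ne_zero).clm_apply
      continuous_const).integrable_of_hasCompactSupport ((hsupp i).fderiv_apply ℝ (b i))
  simp only [hdiv]
  rw [integral_finsetSum _ fun i _ ↦ hint i]
  exact Finset.sum_eq_zero fun i _ ↦ integral_fderiv_apply_eq_zero μ (hcoord i) (hsupp i) (b i)

lemma integral_le_integral_of_le_add_divergence (μ : Measure E) [μ.IsAddHaarMeasure] {u v : E → ℝ}
    {T : E → E} (hu : Integrable u μ) (hv : Integrable v μ) (hT : ContDiff ℝ 1 T)
    (hc : HasCompactSupport T) (h : ∀ x, u x ≤ v x + divergence T x) :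
    ∫ x, u x ∂μ ≤ ∫ x, v x ∂μ := by
  have hdiv : Integrable (divergence T) μ :=
    (continuous_divergence hT).integrable_of_hasCompactSupport <|
      (hc.fderiv ℝ).comp_left (g := fun L : E →L[ℝ] E ↦ LinearMap.trace ℝ E L) (by simp)
  calc ∫ x, u x ∂μ ≤ ∫ x, v x + divergence T x ∂μ := integral_mono hu (hv.add hdiv) h
    _ = ∫ x, v x ∂μ := by
        rw [integral_add hv hdiv, integral_divergence_eq_zero μ hT hc, add_zero]

end Divergence

section PointwiseIdentity

variable {E : Type*} [NormedAddCommGroup E] [NormedSpace ℝ E]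
variable {H : Type*} [NormedAddCommGroup H] [InnerProductSpace ℝ H]

lemma norm_add_sq_sub_norm_sub_sq (a b : H) : ‖a + b‖ ^ 2 - ‖a - b‖ ^ 2 = 4 * ⟪a, b⟫ := by
  rw [norm_add_sq_real, norm_sub_sq_real]
  ring

variable [NormedSpace ℂ H]

lemma inner_I_smul_I_smul (a b : H) : ⟪I • a, I • b⟫ = ⟪a, b⟫ := by
  have hnorm : ∀ c : H, ‖I • c‖ = ‖c‖ := fun c ↦ by simp [norm_smul]
  rw [real_inner_eq_norm_add_mul_self_sub_norm_mul_self_sub_norm_mul_self_div_two,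
    real_inner_eq_norm_add_mul_self_sub_norm_mul_self_sub_norm_mul_self_div_two, ← smul_add,
    hnorm, hnorm, hnorm]

lemma inner_I_smul_left_eq_neg (a b : H) : ⟪I • a, b⟫ = -⟪a, I • b⟫ := by
  rw [← inner_I_smul_I_smul, smul_smul, I_mul_I, neg_one_smul, inner_neg_left]

lemma inner_self_I_smul (a : H) : ⟪a, I • a⟫ = 0 := by
  linarith [inner_I_smul_left_eq_neg a a, real_inner_comm a (I • a)]

variable [IsScalarTower ℝ ℂ H]

lemma norm_sq_sub_norm_sq_conjugated (a b f : H) (l p q : ℝ) :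
    ‖a + I • b - l • (p • f + q • I • f)‖ ^ 2 - ‖a - I • b + l • (p • f - q • I • f)‖ ^ 2 =
      4 * ⟪a, I • b⟫ - 4 * l * (p * ⟪f, a⟫ + q * ⟪f, b⟫) := by
  have hsum : a + I • b - l • (p • f + q • I • f) =
      (a - (l * q) • I • f) + (I • b - (l * p) • f) := by module
  have hdiff : a - I • b + l • (p • f - q • I • f) =
      (a - (l * q) • I • f) - (I • b - (l * p) • f) := by module
  have hcross : ⟪a - (l * q) • I • f, I • b - (l * p) • f⟫ =
      ⟪a, I • b⟫ - l * (p * ⟪f, a⟫ + q * ⟪f, b⟫) := by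
    simp only [inner_sub_left, inner_sub_right, real_inner_smul_left, real_inner_smul_right,
      inner_I_smul_I_smul, real_inner_comm f (I • f), inner_self_I_smul, real_inner_comm f a]
    ring
  rw [hsum, hdiff, norm_add_sq_sub_norm_sub_sq, hcross]
  ring

/-- `dφ(X) X + dφ(Y) Y`: the gradient of `φ` for the degenerate metric in which `X`, `Y` are
orthonormal. -/
noncomputable def gradientField (X : E) (Y : E → E) (φ : E → ℝ) (y : E) : E :=
  fderiv ℝ φ y X • X + fderiv ℝ φ y (Y y) • Y y

/-- The null Lagrangian `⟪df(X), i df(Y)⟫` is, up to lower order terms, the divergence of half this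
field. -/
noncomputable def nullField (X : E) (Y : E → E) (f : E → H) (y : E) : E :=
  ⟪f y, I • fderiv ℝ f y (Y y)⟫ • X - ⟪f y, I • fderiv ℝ f y X⟫ • Y y

/-- The field `[X, Y] - div(Y) X` for a constant field `X`: it collects the first order error terms
that a variable `Y` causes in the integrations by parts. -/
noncomputable def torsionField (X : E) (Y : E → E) (y : E) : E :=
  fderiv ℝ Y y X - divergence Y y • X

/-- The flux in the Carleman identity `norm_sq_add_divergence_carlemanFlux`. -/
noncomputable def carlemanFlux (X : E) (Y : E → E) (φ : E → ℝ) (l : ℝ) (f : E → H) (y : E) : E :=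
  (2 * l * ‖f y‖ ^ 2) • gradientField X Y φ y - (2 : ℝ) • nullField X Y f y

variable {X : E} {Y : E → E} {φ : E → ℝ} {f : E → H}

lemma contDiff_fderiv_apply {G : Type*} [NormedAddCommGroup G] [NormedSpace ℝ G] {g : E → G}
    (hg : ContDiff ℝ 2 g) (hY : ContDiff ℝ 1 Y) : ContDiff ℝ 1 fun y ↦ fderiv ℝ g y (Y y) :=
  (hg.fderiv_right (by norm_num)).clm_apply hY

lemma contDiff_gradientField (hY : ContDiff ℝ 1 Y) (hφ : ContDiff ℝ 2 φ) :
    ContDiff ℝ 1 (gradientField X Y φ) :=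
  ((contDiff_fderiv_apply hφ contDiff_const).smul contDiff_const).add
    ((contDiff_fderiv_apply hφ hY).smul hY)

lemma contDiff_nullField (hY : ContDiff ℝ 1 Y) (hf : ContDiff ℝ 2 f) :
    ContDiff ℝ 1 (nullField X Y f) := by
  have hf1 : ContDiff ℝ 1 f := hf.of_le (by norm_num)
  exact ((hf1.inner ℝ ((contDiff_fderiv_apply hf hY).const_smul I)).smul contDiff_const).sub
    ((hf1.inner ℝ ((contDiff_fderiv_apply hf contDiff_const).const_smul I)).smul hY)

lemma contDiff_carlemanFlux (hY : ContDiff ℝ 1 Y) (hφ : ContDiff ℝ 2 φ) (hf : ContDiff ℝ 2 f)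
    (l : ℝ) : ContDiff ℝ 1 (carlemanFlux X Y φ l f) :=
  ((contDiff_const.mul ((hf.of_le (by norm_num)).norm_sq ℝ)).smul
    (contDiff_gradientField hY hφ)).sub ((contDiff_nullField hY hf).const_smul 2)

lemma fderiv_inner_I_smul_fderiv_apply {Y' : E →L[ℝ] E} {x : E} (hf : ContDiff ℝ 2 f)
    (hY : HasFDerivAt Y Y' x) (v : E) :
    fderiv ℝ (fun y ↦ ⟪f y, I • fderiv ℝ f y (Y y)⟫) x v =
      ⟪fderiv ℝ f x v, I • fderiv ℝ f x (Y x)⟫ +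
        ⟪f x, I • (fderiv ℝ (fderiv ℝ f) x v (Y x) + fderiv ℝ f x (Y' v))⟫ := by
  have hdf : HasFDerivAt (fderiv ℝ f) (fderiv ℝ (fderiv ℝ f) x) x :=
    ((hf.fderiv_right (m := 1) (by norm_num)).differentiable one_ne_zero x).hasFDerivAt
  have hf' : HasFDerivAt f (fderiv ℝ f x) x := (hf.differentiable two_ne_zero x).hasFDerivAt
  rw [(hf'.inner ℝ ((hdf.clm_apply hY).fun_const_smul I)).fderiv]
  simp [add_comm]

variable [FiniteDimensional ℝ E]

lemma divergence_nullField (hY : ContDiff ℝ 1 Y) (hf : ContDiff ℝ 2 f) (x : E) :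
    divergence (nullField X Y f) x =
      2 * ⟪fderiv ℝ f x X, I • fderiv ℝ f x (Y x)⟫ +
        ⟪f x, I • fderiv ℝ f x (torsionField X Y x)⟫ := by
  have hYx : DifferentiableAt ℝ Y x := hY.differentiable one_ne_zero x
  have hf1 : ContDiff ℝ 1 f := hf.of_le (by norm_num)
  have hu : DifferentiableAt ℝ (fun y ↦ ⟪f y, I • fderiv ℝ f y (Y y)⟫) x :=
    (hf1.inner ℝ ((contDiff_fderiv_apply hf hY).const_smul I)).differentiable one_ne_zero x
  have hw : DifferentiableAt ℝ (fun y ↦ ⟪f y, I • fderiv ℝ f y X⟫) x :=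
    (hf1.inner ℝ ((contDiff_fderiv_apply hf contDiff_const).const_smul I)).differentiable
      one_ne_zero x
  have hsymm : fderiv ℝ (fderiv ℝ f) x (Y x) X = fderiv ℝ (fderiv ℝ f) x X (Y x) :=
    hf.contDiffAt.isSymmSndFDerivAt (by simp) (Y x) X
  have hskew : ⟪fderiv ℝ f x (Y x), I • fderiv ℝ f x X⟫ =
      -⟪fderiv ℝ f x X, I • fderiv ℝ f x (Y x)⟫ := by
    rw [real_inner_comm, inner_I_smul_left_eq_neg]
  unfold nullField
  rw [divergence_sub (hu.fun_smul (differentiableAt_const X)) (hw.fun_smul hYx),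
    divergence_smul hu (differentiableAt_const X), divergence_smul hw hYx, divergence_const,
    fderiv_inner_I_smul_fderiv_apply hf hYx.hasFDerivAt,
    fderiv_inner_I_smul_fderiv_apply hf (hasFDerivAt_const X x), hsymm, hskew]
  simp only [torsionField, map_sub, map_smul, smul_add, smul_sub, inner_add_right, inner_sub_right,
    smul_comm I (divergence Y x), real_inner_smul_right, zero_apply, map_zero, smul_zero,
    inner_zero_right]
  ring

lemma norm_sq_add_divergence_carlemanFlux (hY : ContDiff ℝ 1 Y) (hφ : ContDiff ℝ 2 φ)
    (hf : ContDiff ℝ 2 f) (l : ℝ) (x : E) :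
    ‖fderiv ℝ f x X + I • fderiv ℝ f x (Y x) -
          l • (fderiv ℝ φ x X • f x + fderiv ℝ φ x (Y x) • I • f x)‖ ^ 2 +
        divergence (carlemanFlux X Y φ l f) x =
      ‖fderiv ℝ f x X - I • fderiv ℝ f x (Y x) +
          l • (fderiv ℝ φ x X • f x - fderiv ℝ φ x (Y x) • I • f x)‖ ^ 2 +
        2 * l * ‖f x‖ ^ 2 * divergence (gradientField X Y φ) x -
        2 * ⟪f x, I • fderiv ℝ f x (torsionField X Y x)⟫ := by
  have hN : HasFDerivAt (fun y ↦ 2 * l * ‖f y‖ ^ 2) _ x :=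
    ((hf.differentiable two_ne_zero x).hasFDerivAt.norm_sq).const_mul (2 * l)
  have hW : DifferentiableAt ℝ (gradientField X Y φ) x :=
    (contDiff_gradientField hY hφ).differentiable one_ne_zero x
  have hT : DifferentiableAt ℝ (nullField X Y f) x :=
    (contDiff_nullField hY hf).differentiable one_ne_zero x
  have hflux : divergence (carlemanFlux X Y φ l f) x =
      4 * l * (fderiv ℝ φ x X * ⟪f x, fderiv ℝ f x X⟫ +
          fderiv ℝ φ x (Y x) * ⟪f x, fderiv ℝ f x (Y x)⟫) +
        2 * l * ‖f x‖ ^ 2 * divergence (gradientField X Y φ) x -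
        2 * divergence (nullField X Y f) x := by
    unfold carlemanFlux
    rw [divergence_sub (hN.differentiableAt.fun_smul hW) (hT.fun_const_smul 2),
      divergence_smul hN.differentiableAt hW, divergence_smul (differentiableAt_const 2) hT,
      hN.fderiv]
    simp [gradientField, inner_add_right, real_inner_smul_right]
    ring
  linarith [norm_sq_sub_norm_sq_conjugated (fderiv ℝ f x X) (fderiv ℝ f x (Y x)) (f x) l
    (fderiv ℝ φ x X) (fderiv ℝ φ x (Y x)), divergence_nullField (X := X) hY hf x]

end PointwiseIdentity

section CarlemanEstimate

/-- The absorption step of a Carleman argument: the part of `h` that is not controlled by `g` only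
sees the smaller values of the weight `w`. -/
lemma mul_setIntegral_le_integral_of_weight {X : Type*} [MeasurableSpace X] {μ : Measure X}
    {S : Set X} (hS : MeasurableSet S) {w g h : X → ℝ} {T C a : ℝ} (hT : 0 < T) (hw : ∀ x, 0 ≤ w x)
    (hwS : ∀ x ∈ S, T ≤ w x) (hwSc : ∀ x ∉ S, w x ≤ T) (hg : ∀ x, 0 ≤ g x) (hh : ∀ x, 0 ≤ h x)
    (hC : 0 ≤ C) (hhg : ∀ x ∈ S, h x ≤ C * g x) (hCa : C ≤ a) (hg_int : Integrable g μ)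
    (hh_int : Integrable h μ) (hwg_int : Integrable (fun x ↦ w x * g x) μ)
    (hwh_int : Integrable (fun x ↦ w x * h x) μ)
    (hle : a * ∫ x, w x * g x ∂μ ≤ ∫ x, w x * h x ∂μ) :
    (a - C) * ∫ x in S, g x ∂μ ≤ ∫ x, h x ∂μ := by
  have hupper : ∫ x, w x * h x ∂μ ≤ C * ∫ x, w x * g x ∂μ + T * ∫ x, h x ∂μ := by
    rw [← integral_const_mul, ← integral_const_mul,
      ← integral_add (hwg_int.const_mul C) (hh_int.const_mul T)]
    refine integral_mono hwh_int ((hwg_int.const_mul C).add (hh_int.const_mul T)) fun x ↦ ?_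
    by_cases hx : x ∈ S
    · calc w x * h x ≤ w x * (C * g x) := mul_le_mul_of_nonneg_left (hhg x hx) (hw x)
        _ = C * (w x * g x) := by ring
        _ ≤ C * (w x * g x) + T * h x := le_add_of_nonneg_right (mul_nonneg hT.le (hh x))
    · exact le_add_of_nonneg_of_le (mul_nonneg hC (mul_nonneg (hw x) (hg x)))
        (mul_le_mul_of_nonneg_right (hwSc x hx) (hh x))
  have hlower : T * ∫ x in S, g x ∂μ ≤ ∫ x, w x * g x ∂μ := by
    rw [← integral_const_mul]
    exact (setIntegral_mono_on (hg_int.const_mul T).integrableOn hwg_int.integrableOn hS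
      fun x hx ↦ mul_le_mul_of_nonneg_right (hwS x hx) (hg x)).trans
      (setIntegral_le_integral hwg_int (.of_forall fun x ↦ mul_nonneg (hw x) (hg x)))
  refine le_of_mul_le_mul_left ?_ hT
  linarith [mul_le_mul_of_nonneg_left hlower (sub_nonneg.2 hCa)]

variable {E : Type*} [NormedAddCommGroup E] [NormedSpace ℝ E]

section Dbar

variable {F : Type*} [NormedAddCommGroup F] [NormedSpace ℝ F] [NormedSpace ℂ F]
  [IsScalarTower ℝ ℂ F]

/-- The operator `f ↦ df + i df ∘ A`. If `A` is an almost complex structure, this is twice the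
Cauchy-Riemann operator `∂̄`, acting on functions with values in a complex vector space. -/
noncomputable def dbar (A : E → E →L[ℝ] E) (f : E → F) (x : E) : E →L[ℝ] F :=
  fderiv ℝ f x + I • (fderiv ℝ f x).comp (A x)

variable {A : E → E →L[ℝ] E} {f : E → F}

lemma dbar_apply (x v : E) :
    dbar A f x v = fderiv ℝ f x v + I • fderiv ℝ f x (A x v) := rfl

lemma continuous_dbar (hA : Continuous A) (hf : ContDiff ℝ 1 f) : Continuous (dbar A f) :=
  (hf.continuous_fderiv one_ne_zero).add
    (((hf.continuous_fderiv one_ne_zero).clm_comp hA).const_smul I)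

lemma dbar_eq_zero_of_notMem {K : Set E} (hK : IsClosed K) (hf : ∀ x ∉ K, f x = 0) {x : E}
    (hx : x ∉ K) : dbar A f x = 0 := by
  have hdf : fderiv ℝ f x = 0 := fderiv_of_notMem_tsupport ℝ fun h ↦
    hx (closure_minimal (support_subset_iff'.2 hf) hK h)
  simp [dbar, hdf]

lemma dbar_smul_apply {u : E → ℝ} {x : E} (hu : DifferentiableAt ℝ u x)
    (hf : DifferentiableAt ℝ f x) (v : E) :
    dbar A (fun y ↦ u y • f y) x v =
      u x • dbar A f x v + (fderiv ℝ u x v • f x + fderiv ℝ u x (A x v) • I • f x) := by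
  simp only [dbar_apply, fderiv_fun_smul hu hf, add_apply, smul_apply,
    ContinuousLinearMap.smulRight_apply, smul_add, smul_comm I (_ : ℝ)]
  abel

variable [MeasurableSpace E] [OpensMeasurableSpace E] (μ : Measure E) [IsFiniteMeasureOnCompacts μ]
  {K : Set E}

lemma integrable_mul_norm_dbar_sq (hA : Continuous A) (hK : IsCompact K) (hf : ContDiff ℝ 1 f)
    (hfK : ∀ x ∉ K, f x = 0) {w : E → ℝ} (hw : Continuous w) :
    Integrable (fun x ↦ w x * ‖dbar A f x‖ ^ 2) μ :=
  (hw.mul ((continuous_dbar hA hf).norm.pow 2)).integrable_of_hasCompactSupport <|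
    .intro hK fun x hx ↦ by simp [dbar_eq_zero_of_notMem hK.isClosed hfK hx]

lemma mul_setIntegral_norm_sq_le (hA : Continuous A) (hK : IsCompact K) {ψ : E → ℝ}
    (hψ : Continuous ψ) (hf : ContDiff ℝ 1 f) (hfK : ∀ x ∉ K, f x = 0) {t C : ℝ}
    (hbound : ∀ x, t < ψ x → ‖dbar A f x‖ ≤ C * ‖f x‖) {s l a : ℝ} (hs : 0 ≤ s) (hl : 0 ≤ l)
    (ha : C ^ 2 ≤ a)
    (hcarleman : a * ∫ x, Real.exp (l * Real.exp (s * ψ x)) ^ 2 * ‖f x‖ ^ 2 ∂μ ≤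
      ∫ x, Real.exp (l * Real.exp (s * ψ x)) ^ 2 * ‖dbar A f x‖ ^ 2 ∂μ) :
    (a - C ^ 2) * ∫ x in {x | t < ψ x}, ‖f x‖ ^ 2 ∂μ ≤ ∫ x, ‖dbar A f x‖ ^ 2 ∂μ := by
  have hf_int {u : E → ℝ} (hu : Continuous u) : Integrable (fun x ↦ u x * ‖f x‖ ^ 2) μ :=
    (hu.mul (hf.continuous.norm.pow 2)).integrable_of_hasCompactSupport <|
      .intro hK (by simp +contextual [hfK])
  have hdbar_int {u : E → ℝ} (hu : Continuous u) : Integrable (fun x ↦ u x * ‖dbar A f x‖ ^ 2) μ :=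
    integrable_mul_norm_dbar_sq μ hA hK hf hfK hu
  have hweight : Continuous fun x ↦ Real.exp (l * Real.exp (s * ψ x)) ^ 2 := by fun_prop
  refine mul_setIntegral_le_integral_of_weight (isOpen_lt continuous_const hψ).measurableSet
    (T := Real.exp (l * Real.exp (s * t)) ^ 2) (by positivity) (fun x ↦ by positivity)
    (fun x (hx : t < ψ x) ↦ by gcongr) (fun x hx ↦ ?_) (fun x ↦ by positivity)
    (fun x ↦ sq_nonneg _) (sq_nonneg C) (fun x hx ↦ ?_) ha
    (by simpa using hf_int continuous_one) (by simpa using hdbar_int continuous_one)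
    (hf_int hweight) (hdbar_int hweight) hcarleman
  · have : ψ x ≤ t := not_lt.1 hx
    gcongr
  · rw [← mul_pow]
    gcongr
    exact hbound x hx

end Dbar

variable {H : Type*} [NormedAddCommGroup H] [InnerProductSpace ℝ H]
variable {A : E → E →L[ℝ] E} {K : Set E} {ι : Type*} [Fintype ι]

lemma exists_norm_apply_le_sum_norm_apply_basis (b : Basis ι ℝ E) {V : ι → E → E}
    (hV : ∀ i, Continuous (V i)) (hK : IsCompact K) :
    ∃ C ≥ 0, ∀ x ∈ K, ∀ L : E →L[ℝ] H, ∀ i, ‖L (V i x)‖ ≤ C * ∑ j, ‖L (b j)‖ := by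
  obtain ⟨B, hB, hbasis⟩ := b.exists_opNorm_le (F := H)
  obtain ⟨M, hM⟩ := hK.exists_bound_of_continuousOn (f := fun x i ↦ V i x)
    (continuous_pi hV).continuousOn
  refine ⟨B * |M|, by positivity, fun x hx L i ↦ ?_⟩
  have hL : ‖L‖ ≤ B * ∑ j, ‖L (b j)‖ := hbasis (by positivity) fun i ↦
    Finset.single_le_sum (f := fun j ↦ ‖L (b j)‖) (fun j _ ↦ norm_nonneg _) (Finset.mem_univ i)
  have hVx : ‖V i x‖ ≤ |M| := ((norm_le_pi_norm _ i).trans (hM x hx)).trans (le_abs_self M)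
  calc ‖L (V i x)‖ ≤ (B * ∑ j, ‖L (b j)‖) * |M| := L.le_of_opNorm_le_of_le hL hVx
    _ = B * |M| * ∑ j, ‖L (b j)‖ := by ring

lemma sum_norm_apply_sq_le (v : ι → E) (L : E →L[ℝ] H) :
    ∑ i, ‖L (v i)‖ ^ 2 ≤ (∑ i, ‖v i‖ ^ 2) * ‖L‖ ^ 2 := by
  rw [Finset.sum_mul]
  gcongr with i
  rw [mul_comm, ← mul_pow]
  gcongr
  exact L.le_opNorm (v i)

variable [NormedSpace ℂ H]

lemma exists_sum_inner_torsionField_le [FiniteDimensional ℝ E] (b : Basis ι ℝ E)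
    (hA : ContDiff ℝ 1 A) (hK : IsCompact K) :
    ∃ C ≥ 0, ∀ f : E → H, ∀ x ∈ K,
      ∑ i, 2 * ⟪f x, I • fderiv ℝ f x (torsionField (b i) (fun y ↦ A y (b i)) x)⟫ ≤
        C * ‖f x‖ * ∑ i, ‖fderiv ℝ f x (b i)‖ := by
  have htorsion : ∀ i, Continuous (torsionField (b i) fun y ↦ A y (b i)) := fun i ↦ by
    have hY : ContDiff ℝ 1 fun y ↦ A y (b i) := hA.clm_apply contDiff_const
    exact ((hY.continuous_fderiv one_ne_zero).clm_apply continuous_const).sub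
      ((continuous_divergence hY).smul continuous_const)
  obtain ⟨C, hC, hbound⟩ := exists_norm_apply_le_sum_norm_apply_basis (H := H) b htorsion hK
  refine ⟨2 * Fintype.card ι * C, by positivity, fun f x hx ↦ ?_⟩
  calc ∑ i, 2 * ⟪f x, I • fderiv ℝ f x (torsionField (b i) (fun y ↦ A y (b i)) x)⟫
      ≤ ∑ _i : ι, 2 * (‖f x‖ * (C * ∑ j, ‖fderiv ℝ f x (b j)‖)) := by
        gcongr with i
        refine (real_inner_le_norm _ _).trans ?_
        gcongr
        simpa [norm_smul] using hbound x hx (fderiv ℝ f x) i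
    _ = 2 * Fintype.card ι * C * ‖f x‖ * ∑ i, ‖fderiv ℝ f x (b i)‖ := by
        rw [Finset.sum_const, Finset.card_univ, nsmul_eq_mul]
        ring

variable [IsScalarTower ℝ ℂ H]

lemma mul_norm_mul_norm_le_conjugated (a b f : H) {C l : ℝ} (hC : 0 ≤ C) (hl : 0 ≤ l) (p q : ℝ) :
    C * ‖f‖ * ‖a‖ ≤ ‖a + I • b - l • (p • f + q • I • f)‖ ^ 2 +
      ‖a - I • b + l • (p • f - q • I • f)‖ ^ 2 + (C ^ 2 + l * (C * |q|)) * ‖f‖ ^ 2 := by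
  set P := a + I • b - l • (p • f + q • I • f) with hP
  set P' := a - I • b + l • (p • f - q • I • f) with hP'
  have ha : a = (2⁻¹ : ℝ) • P + (2⁻¹ : ℝ) • P' + (l * q) • I • f := by
    rw [hP, hP']
    module
  have hnorm : ‖a‖ ≤ 2⁻¹ * ‖P‖ + 2⁻¹ * ‖P'‖ + l * |q| * ‖f‖ := by
    calc ‖a‖ ≤ ‖(2⁻¹ : ℝ) • P‖ + ‖(2⁻¹ : ℝ) • P'‖ + ‖(l * q) • I • f‖ := by
          conv_lhs => rw [ha]
          exact norm_add₃_le
      _ = 2⁻¹ * ‖P‖ + 2⁻¹ * ‖P'‖ + l * |q| * ‖f‖ := by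
          simp [norm_smul, abs_of_nonneg hl]
  have hCf : 0 ≤ C * ‖f‖ := by positivity
  nlinarith [mul_le_mul_of_nonneg_left hnorm hCf, sq_nonneg (C * ‖f‖ - ‖P‖),
    sq_nonneg (C * ‖f‖ - ‖P'‖), sq_nonneg ‖P‖, sq_nonneg ‖P'‖]

lemma dbar_exp_smul_sub {φ : E → ℝ} {h : E → H} (hφ : ContDiff ℝ 2 φ) (hh : ContDiff ℝ 2 h)
    (l : ℝ) (x v : E) :
    dbar A (fun y ↦ Real.exp (l * φ y) • h y) x v -
        l • (fderiv ℝ φ x v • Real.exp (l * φ x) • h x +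
          fderiv ℝ φ x (A x v) • I • Real.exp (l * φ x) • h x) =
      Real.exp (l * φ x) • dbar A h x v := by
  have hexp := ((hφ.differentiable two_ne_zero x).hasFDerivAt.const_mul l).exp
  rw [dbar_smul_apply hexp.differentiableAt (hh.differentiable two_ne_zero x), hexp.fderiv]
  simp only [smul_apply, smul_eq_mul, smul_comm I (_ : ℝ)]
  module

/-- The quantity `∑ⱼ (2 div Wⱼ - C |dφ(A bⱼ)|)`, with `Wⱼ` the gradient field of `φ` in the
directions `bⱼ`, `A bⱼ`. Its positivity is what makes `φ` a Carleman weight for `dbar A`. -/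
noncomputable def carlemanSymbol (A : E → E →L[ℝ] E) (b : Basis ι ℝ E) (C : ℝ) (φ : E → ℝ)
    (x : E) : ℝ :=
  ∑ i, (2 * divergence (gradientField (b i) (fun y ↦ A y (b i)) φ) x -
    C * |fderiv ℝ φ x (A x (b i))|)

variable [FiniteDimensional ℝ E]

lemma mul_norm_sq_add_mul_norm_fderiv_le {X : E} {Y : E → E} {φ : E → ℝ} {f : E → H} {C l : ℝ}
    (hY : ContDiff ℝ 1 Y) (hφ : ContDiff ℝ 2 φ) (hf : ContDiff ℝ 2 f) (hC : 0 ≤ C) (hl : 0 ≤ l)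
    (x : E) :
    (l * (2 * divergence (gradientField X Y φ) x - C * |fderiv ℝ φ x (Y x)|) - C ^ 2) *
        ‖f x‖ ^ 2 + C * ‖f x‖ * ‖fderiv ℝ f x X‖ ≤
      2 * ‖fderiv ℝ f x X + I • fderiv ℝ f x (Y x) -
          l • (fderiv ℝ φ x X • f x + fderiv ℝ φ x (Y x) • I • f x)‖ ^ 2 +
        divergence (carlemanFlux X Y φ l f) x +
        2 * ⟪f x, I • fderiv ℝ f x (torsionField X Y x)⟫ := by
  linarith [norm_sq_add_divergence_carlemanFlux (X := X) hY hφ hf l x,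
    mul_norm_mul_norm_le_conjugated (fderiv ℝ f x X) (fderiv ℝ f x (Y x)) (f x) hC hl
      (fderiv ℝ φ x X) (fderiv ℝ φ x (Y x))]

lemma exists_carlemanSymbol_mul_norm_sq_le (b : Basis ι ℝ E) (hA : ContDiff ℝ 1 A)
    (hK : IsCompact K) :
    ∃ C, ∀ φ : E → ℝ, ContDiff ℝ 2 φ → ∀ f : E → H, ContDiff ℝ 2 f → ∀ l ≥ 0, ∀ x ∈ K,
      (l * carlemanSymbol A b C φ x - Fintype.card ι * C ^ 2) * ‖f x‖ ^ 2 ≤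
        2 * ∑ i, ‖dbar A f x (b i) - l • (fderiv ℝ φ x (b i) • f x +
          fderiv ℝ φ x (A x (b i)) • I • f x)‖ ^ 2 +
        divergence (fun y ↦ ∑ i, carlemanFlux (b i) (fun z ↦ A z (b i)) φ l f y) x := by
  have hY : ∀ i, ContDiff ℝ 1 fun y ↦ A y (b i) := fun i ↦ hA.clm_apply contDiff_const
  obtain ⟨C, hC, herror⟩ := exists_sum_inner_torsionField_le (H := H) b hA hK
  refine ⟨C, fun φ hφ f hf l hl x hx ↦ ?_⟩
  have hdiv : divergence (fun y ↦ ∑ i, carlemanFlux (b i) (fun z ↦ A z (b i)) φ l f y) x =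
      ∑ i, divergence (carlemanFlux (b i) (fun z ↦ A z (b i)) φ l f) x :=
    divergence_sum _ fun i _ ↦
      (contDiff_carlemanFlux (hY i) hφ hf l).differentiable one_ne_zero x
  have hsum := Finset.sum_le_sum fun i (_ : i ∈ Finset.univ) ↦
    mul_norm_sq_add_mul_norm_fderiv_le (X := b i) (hY i) hφ hf hC hl x
  rw [Finset.sum_add_distrib, ← Finset.sum_mul, Finset.sum_sub_distrib, ← Finset.mul_sum,
    Finset.sum_const, Finset.card_univ, nsmul_eq_mul, Finset.sum_add_distrib,
    Finset.sum_add_distrib, ← Finset.mul_sum, ← Finset.mul_sum] at hsum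
  simp only [hdiv, carlemanSymbol, dbar_apply]
  linarith [herror f x hx]

lemma divergence_gradientField_exp {X : E} {Y : E → E} {ψ : E → ℝ} (hY : ContDiff ℝ 1 Y)
    (hψ : ContDiff ℝ 2 ψ) (s : ℝ) (x : E) :
    divergence (gradientField X Y fun y ↦ Real.exp (s * ψ y)) x =
      s * Real.exp (s * ψ x) * (divergence (gradientField X Y ψ) x +
        s * (fderiv ℝ ψ x X ^ 2 + fderiv ℝ ψ x (Y x) ^ 2)) := by
  have hexp : ∀ y, HasFDerivAt (fun y ↦ Real.exp (s * ψ y))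
      (Real.exp (s * ψ y) • s • fderiv ℝ ψ y) y := fun y ↦
    ((hψ.differentiable two_ne_zero y).hasFDerivAt.const_mul s).exp
  have hfield : gradientField X Y (fun y ↦ Real.exp (s * ψ y)) =
      fun y ↦ (s * Real.exp (s * ψ y)) • gradientField X Y ψ y := by
    ext1 y
    simp only [gradientField, (hexp y).fderiv, smul_apply, smul_eq_mul]
    module
  rw [hfield, divergence_smul ((hexp x).const_mul s).differentiableAt
    ((contDiff_gradientField hY hψ).differentiable one_ne_zero x), ((hexp x).const_mul s).fderiv]
  simp [gradientField]
  ring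

lemma carlemanSymbol_exp (b : Basis ι ℝ E) (hA : ContDiff ℝ 1 A) {ψ : E → ℝ} (hψ : ContDiff ℝ 2 ψ)
    (C : ℝ) {s : ℝ} (hs : 0 ≤ s) (x : E) :
    carlemanSymbol A b C (fun y ↦ Real.exp (s * ψ y)) x =
      s * Real.exp (s * ψ x) * (carlemanSymbol A b C ψ x +
        2 * s * ∑ i, (fderiv ℝ ψ x (b i) ^ 2 + fderiv ℝ ψ x (A x (b i)) ^ 2)) := by
  have hexp : fderiv ℝ (fun y ↦ Real.exp (s * ψ y)) x = Real.exp (s * ψ x) • s • fderiv ℝ ψ x :=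
    ((hψ.differentiable two_ne_zero x).hasFDerivAt.const_mul s).exp.fderiv
  simp only [carlemanSymbol, hexp, Finset.mul_sum, ← Finset.sum_add_distrib]
  refine Finset.sum_congr rfl fun i _ ↦ ?_
  rw [divergence_gradientField_exp (hA.clm_apply contDiff_const) hψ]
  simp only [smul_apply, smul_eq_mul, abs_mul, abs_of_nonneg hs, Real.abs_exp]
  ring

lemma continuous_carlemanSymbol (b : Basis ι ℝ E) (hA : ContDiff ℝ 1 A) {ψ : E → ℝ}
    (hψ : ContDiff ℝ 2 ψ) (C : ℝ) : Continuous (carlemanSymbol A b C ψ) := by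
  have hY : ∀ i, ContDiff ℝ 1 fun y ↦ A y (b i) := fun i ↦ hA.clm_apply contDiff_const
  exact continuous_finsetSum _ fun i _ ↦
    ((continuous_divergence (contDiff_gradientField (hY i) hψ)).const_mul 2).sub
      ((contDiff_fderiv_apply hψ (hY i)).continuous.abs.const_mul C)

lemma exists_le_carlemanSymbol_exp (b : Basis ι ℝ E) (hA : ContDiff ℝ 1 A) (hK : IsCompact K)
    {ψ : E → ℝ} (hψ : ContDiff ℝ 2 ψ) (hdψ : ∀ x ∈ K, fderiv ℝ ψ x ≠ 0) (C : ℝ) :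
    ∃ s > 0, ∃ c > 0, ∀ x ∈ K, c ≤ carlemanSymbol A b C (fun y ↦ Real.exp (s * ψ y)) x := by
  have hY : ∀ i, ContDiff ℝ 1 fun y ↦ A y (b i) := fun i ↦ hA.clm_apply contDiff_const
  set N : E → ℝ := fun x ↦ ∑ i, (fderiv ℝ ψ x (b i) ^ 2 + fderiv ℝ ψ x (A x (b i)) ^ 2)
  have hNcont : Continuous N := continuous_finsetSum _ fun i _ ↦
    ((contDiff_fderiv_apply hψ contDiff_const).continuous.pow 2).add
      ((contDiff_fderiv_apply hψ (hY i)).continuous.pow 2)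
  have hNpos : ∀ x ∈ K, 0 < N x := fun x hx ↦ by
    obtain ⟨i, hi⟩ : ∃ i, fderiv ℝ ψ x (b i) ≠ 0 := by
      by_contra! h
      exact hdψ x hx (ContinuousLinearMap.coe_injective (b.ext h))
    exact Finset.sum_pos' (fun j _ ↦ by positivity) ⟨i, Finset.mem_univ i, by positivity⟩
  obtain ⟨m, hm, hmN⟩ := hK.exists_forall_le' hNcont.continuousOn hNpos
  obtain ⟨M, hM⟩ := hK.exists_bound_of_continuousOn
    (continuous_carlemanSymbol b hA hψ C).continuousOn
  set s := (|M| + 1) / m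
  have hs : 0 < s := by positivity
  have hsm : s * m = |M| + 1 := div_mul_cancel₀ _ hm.ne'
  have hexp : Continuous fun x ↦ s * Real.exp (s * ψ x) := by
    have := hψ.continuous
    fun_prop
  obtain ⟨c, hc, hcK⟩ := hK.exists_forall_le' hexp.continuousOn (a := 0) fun x _ ↦ by positivity
  refine ⟨s, hs, c, hc, fun x hx ↦ ?_⟩
  have hbracket : 1 ≤ carlemanSymbol A b C ψ x + 2 * s * N x := by
    have hlower := neg_le_of_abs_le ((hM x hx).trans (le_abs_self M))
    have hsN := mul_le_mul_of_nonneg_left (hmN x hx) hs.le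
    linarith [abs_nonneg M]
  rw [carlemanSymbol_exp b hA hψ C hs.le]
  exact (hcK x hx).trans (le_mul_of_one_le_right (by positivity) hbracket)

lemma exists_mul_integral_norm_sq_le [MeasurableSpace E] [BorelSpace E] (μ : Measure E)
    [μ.IsAddHaarMeasure] (b : Basis ι ℝ E) (hA : ContDiff ℝ 1 A) (hK : IsCompact K) :
    ∃ C, ∀ φ : E → ℝ, ContDiff ℝ 2 φ → ∀ f : E → H, ContDiff ℝ 2 f → (∀ x ∉ K, f x = 0) →
      ∀ l ≥ 0, ∀ a, (∀ x ∈ K, a ≤ l * carlemanSymbol A b C φ x - Fintype.card ι * C ^ 2) →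
      a * ∫ x, ‖f x‖ ^ 2 ∂μ ≤
        2 * ∫ x, ∑ i, ‖dbar A f x (b i) - l • (fderiv ℝ φ x (b i) • f x +
          fderiv ℝ φ x (A x (b i)) • I • f x)‖ ^ 2 ∂μ := by
  obtain ⟨C, hC⟩ := exists_carlemanSymbol_mul_norm_sq_le (H := H) b hA hK
  refine ⟨C, fun φ hφ f hf hfK l hl a ha ↦ ?_⟩
  set P : E → ℝ := fun x ↦ ∑ i, ‖dbar A f x (b i) - l • (fderiv ℝ φ x (b i) • f x +
    fderiv ℝ φ x (A x (b i)) • I • f x)‖ ^ 2 with hPdef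
  set Q : E → E := fun y ↦ ∑ i, carlemanFlux (b i) (fun z ↦ A z (b i)) φ l f y
  have hQ : ContDiff ℝ 1 Q := ContDiff.sum fun i _ ↦
    contDiff_carlemanFlux (hA.clm_apply contDiff_const) hφ hf l
  have hQ_zero : ∀ x, f x = 0 → Q x = 0 := fun x hx ↦ by
    simp [Q, carlemanFlux, nullField, hx]
  have hP : Continuous P := by
    have hdbar := continuous_dbar hA.continuous (hf.of_le (by norm_num : (1 : WithTop ℕ∞) ≤ 2))
    have hdφ := hφ.continuous_fderiv two_ne_zero
    have hAc := hA.continuous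
    have hfc := hf.continuous
    fun_prop
  have hdbar_off : ∀ x ∉ K, dbar A f x = 0 := fun x hx ↦
    dbar_eq_zero_of_notMem hK.isClosed hfK hx
  have hdiv_off : ∀ x ∉ K, divergence Q x = 0 := fun x hx ↦ by
    have hdQ : fderiv ℝ Q x = 0 := fderiv_of_notMem_tsupport ℝ fun h ↦
      hx (closure_minimal (support_subset_iff'.2 fun y hy ↦ hQ_zero y (hfK y hy)) hK.isClosed h)
    simp [divergence, hdQ]
  have hpoint : ∀ x, a * ‖f x‖ ^ 2 ≤ 2 * P x + divergence Q x := fun x ↦ by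
    by_cases hx : x ∈ K
    · exact (mul_le_mul_of_nonneg_right (ha x hx) (by positivity)).trans (hC φ hφ f hf l hl x hx)
    · simp [hPdef, hdbar_off x hx, hdiv_off x hx, hfK x hx]
  have hf_int : Integrable (fun x ↦ ‖f x‖ ^ 2) μ :=
    (hf.continuous.norm.pow 2).integrable_of_hasCompactSupport <|
      .intro hK (by simp +contextual [hfK])
  have hP_int : Integrable P μ := hP.integrable_of_hasCompactSupport <|
    .intro hK fun x hx ↦ by simp [hPdef, hdbar_off x hx, hfK x hx]
  rw [← integral_const_mul, ← integral_const_mul]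
  exact integral_le_integral_of_le_add_divergence μ (hf_int.const_mul a) (hP_int.const_mul 2) hQ
    (.intro hK fun x hx ↦ hQ_zero x (hfK x hx)) hpoint

theorem carleman_estimate [MeasurableSpace E] [BorelSpace E] (μ : Measure E)
    [μ.IsAddHaarMeasure] (hA : ContDiff ℝ 1 A) (hK : IsCompact K) {ψ : E → ℝ}
    (hψ : ContDiff ℝ 2 ψ) (hdψ : ∀ x ∈ K, fderiv ℝ ψ x ≠ 0) :
    ∃ s > 0, ∃ c > 0, ∃ l₀ ≥ 0, ∀ l ≥ l₀, ∀ f : E → H, ContDiff ℝ 2 f → (∀ x ∉ K, f x = 0) →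
      c * l * ∫ x, Real.exp (l * Real.exp (s * ψ x)) ^ 2 * ‖f x‖ ^ 2 ∂μ ≤
        ∫ x, Real.exp (l * Real.exp (s * ψ x)) ^ 2 * ‖dbar A f x‖ ^ 2 ∂μ := by
  let b := finBasis ℝ E
  obtain ⟨C, hC⟩ := exists_mul_integral_norm_sq_le (H := H) μ b hA hK
  obtain ⟨s, hs, c, hc, hcK⟩ := exists_le_carlemanSymbol_exp b hA hK hψ hdψ C
  set D : ℝ := Fintype.card (Fin (finrank ℝ E)) * C ^ 2
  set B : ℝ := 1 + 2 * ∑ i, ‖b i‖ ^ 2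
  have hB : 0 < B := by positivity
  refine ⟨s, hs, c / (2 * B), by positivity, 2 * D / c, by positivity, fun l hl f hf hfK ↦ ?_⟩
  have hl0 : 0 ≤ l := le_trans (by positivity) hl
  have hlD : c / 2 * l ≤ l * c - D := by linarith [(div_le_iff₀ hc).1 hl]
  set φ : E → ℝ := fun x ↦ Real.exp (s * ψ x)
  have hφ : ContDiff ℝ 2 φ := (contDiff_const.mul hψ).exp
  set w : E → ℝ := fun x ↦ Real.exp (l * φ x)
  have hw : ContDiff ℝ 2 w := (contDiff_const.mul hφ).exp
  have hweighted := hC φ hφ (fun x ↦ w x • f x) (hw.smul hf) (fun x hx ↦ by simp [hfK x hx]) l hl0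
    (l * c - D) fun x hx ↦ sub_le_sub_right (mul_le_mul_of_nonneg_left (hcK x hx) hl0) D
  simp only [w, dbar_exp_smul_sub hφ hf, norm_smul, mul_pow, Real.norm_eq_abs, Real.abs_exp]
    at hweighted
  have hdbar_int : Integrable (fun x ↦ w x ^ 2 * ‖dbar A f x‖ ^ 2) μ :=
    integrable_mul_norm_dbar_sq μ hA.continuous hK (hf.of_le (by norm_num)) hfK
      (hw.continuous.pow 2)
  have hbasis : 2 * ∫ x, ∑ i, w x ^ 2 * ‖dbar A f x (b i)‖ ^ 2 ∂μ ≤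
      B * ∫ x, w x ^ 2 * ‖dbar A f x‖ ^ 2 ∂μ := by
    rw [← integral_const_mul, ← integral_const_mul]
    refine integral_mono_of_nonneg (.of_forall fun x ↦ by positivity) (hdbar_int.const_mul B)
      (.of_forall fun x ↦ ?_)
    simp only [← Finset.mul_sum]
    nlinarith [mul_le_mul_of_nonneg_left (sum_norm_apply_sq_le b (dbar A f x)) (sq_nonneg (w x)),
      mul_nonneg (sq_nonneg (w x)) (sq_nonneg ‖dbar A f x‖)]
  have hf_nonneg : 0 ≤ ∫ x, w x ^ 2 * ‖f x‖ ^ 2 ∂μ := integral_nonneg fun x ↦ by positivity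
  calc c / (2 * B) * l * ∫ x, w x ^ 2 * ‖f x‖ ^ 2 ∂μ
      = (c / 2 * l) * (∫ x, w x ^ 2 * ‖f x‖ ^ 2 ∂μ) / B := by
        field_simp
    _ ≤ ∫ x, w x ^ 2 * ‖dbar A f x‖ ^ 2 ∂μ := by
        rw [div_le_iff₀' hB]
        exact ((mul_le_mul_of_nonneg_right hlD hf_nonneg).trans hweighted).trans hbasis

lemma eqOn_zero_of_setIntegral_norm_sq_eq_zero {X V : Type*} [TopologicalSpace X]
    [MeasurableSpace X] [OpensMeasurableSpace X] [NormedAddCommGroup V] {μ : Measure X}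
    [μ.IsOpenPosMeasure] {f : X → V} {S : Set X} (hS : IsOpen S) (hf : Continuous f)
    (hint : Integrable (fun x ↦ ‖f x‖ ^ 2) μ) (hzero : ∫ x in S, ‖f x‖ ^ 2 ∂μ = 0) :
    EqOn f 0 S := by
  refine Measure.eqOn_open_of_ae_eq (μ := μ) ?_ hS hf.continuousOn continuousOn_const
  filter_upwards [(setIntegral_eq_zero_iff_of_nonneg_ae (.of_forall fun x ↦ sq_nonneg ‖f x‖)
    hint.integrableOn).1 hzero] with x hx using by simpa using hx

lemma eq_zero_of_norm_dbar_le_of_lt_of_inner (hA : ContDiff ℝ 1 A) (hK : IsCompact K) {ψ : E → ℝ}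
    (hψ : ContDiff ℝ 2 ψ) (hdψ : ∀ x ∈ K, fderiv ℝ ψ x ≠ 0) {f : E → H} (hf : ContDiff ℝ 2 f)
    (hfK : ∀ x ∉ K, f x = 0) {t C : ℝ} (hbound : ∀ x, t < ψ x → ‖dbar A f x‖ ≤ C * ‖f x‖) {x : E}
    (hx : t < ψ x) : f x = 0 := by
  borelize E
  let μ : Measure E := Measure.addHaar
  obtain ⟨s, hs, c, hc, l₀, hl₀, hcarleman⟩ := carleman_estimate (H := H) μ hA hK hψ hdψ
  set M := ∫ x in {x | t < ψ x}, ‖f x‖ ^ 2 ∂μ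
  set N := ∫ x, ‖dbar A f x‖ ^ 2 ∂μ
  have hlarge : ∀ l ≥ l₀, C ^ 2 ≤ c * l → (c * l - C ^ 2) * M ≤ N := fun l hl hCl ↦
    mul_setIntegral_norm_sq_le μ hA.continuous hK hψ.continuous (hf.of_le (by norm_num)) hfK
      hbound hs.le (hl₀.trans hl) hCl (hcarleman l hl f hf hfK)
  have hM_zero : M = 0 := by
    refine (integral_nonneg fun x ↦ by positivity).antisymm' (not_lt.1 fun hM_pos ↦ ?_)
    have hN : 0 ≤ N := integral_nonneg fun x ↦ sq_nonneg _
    set l := max l₀ ((C ^ 2 + N / M + 1) / c)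
    have hl : C ^ 2 + N / M + 1 ≤ c * l := (div_le_iff₀' hc).1 (le_max_right _ _)
    have hNM : (N / M + 1) * M ≤ N :=
      (mul_le_mul_of_nonneg_right (by linarith) hM_pos.le).trans
        (hlarge l (le_max_left _ _) (by linarith [div_nonneg hN hM_pos.le]))
    rw [add_mul, div_mul_cancel₀ _ hM_pos.ne'] at hNM
    linarith
  exact eqOn_zero_of_setIntegral_norm_sq_eq_zero (isOpen_lt continuous_const hψ.continuous)
    hf.continuous ((hf.continuous.norm.pow 2).integrable_of_hasCompactSupport <|
      .intro hK (by simp +contextual [hfK])) hM_zero hx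

end CarlemanEstimate

section UniqueContinuation

variable {E : Type*} [NormedAddCommGroup E] [NormedSpace ℝ E]
variable {F : Type*} [NormedAddCommGroup F] [NormedSpace ℝ F]

lemma contDiff_smul_of_contDiffOn {n : WithTop ℕ∞} {U : Set E} (hU : IsOpen U) {χ : E → ℝ}
    (hχ : ContDiff ℝ n χ) (hχU : tsupport χ ⊆ U) {g : E → F} (hg : ContDiffOn ℝ n g U) :
    ContDiff ℝ n fun x ↦ χ x • g x :=
  contDiff_iff_contDiffAt.2 fun x ↦ by
    by_cases hx : x ∈ tsupport χ
    · exact hχ.contDiffAt.smul (hg.contDiffAt (hU.mem_nhds (hχU hx)))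
    · refine (contDiffAt_const (c := 0)).congr_of_eventuallyEq ?_
      filter_upwards [notMem_tsupport_iff_eventuallyEq.1 hx] with y hy
      simp [hy]

variable [NormedSpace ℂ F] [IsScalarTower ℝ ℂ F]

section Comp

variable {G : Type*} [NormedAddCommGroup G] [NormedSpace ℝ G] [NormedSpace ℂ G]
  [IsScalarTower ℝ ℂ G]

lemma dbar_continuousLinearMap_comp (A : E → E →L[ℝ] E) (e : F →L[ℂ] G) {f : E → F} {x : E}
    (hf : DifferentiableAt ℝ f x) :
    dbar A (fun y ↦ e (f y)) x = (e.restrictScalars ℝ).comp (dbar A f x) := by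
  ext v
  have hderiv : fderiv ℝ (fun y ↦ e (f y)) x = (e.restrictScalars ℝ).comp (fderiv ℝ f x) :=
    ((e.restrictScalars ℝ).hasFDerivAt.comp x hf.hasFDerivAt).fderiv
  simp [dbar_apply, hderiv]

lemma norm_dbar_continuousLinearEquiv_comp_le {A : E → E →L[ℝ] E} (e : F ≃L[ℂ] G) {f : E → F}
    {x : E} {C : ℝ} (hf : DifferentiableAt ℝ f x) (hbound : ‖dbar A f x‖ ≤ C * ‖f x‖) :
    ‖dbar A (fun y ↦ e (f y)) x‖ ≤
      ‖(e : F →L[ℂ] G)‖ * (|C| * ‖(e.symm : G →L[ℂ] F)‖) * ‖e (f x)‖ := by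
  have hinv : ‖f x‖ ≤ ‖(e.symm : G →L[ℂ] F)‖ * ‖e (f x)‖ := by
    simpa using (e.symm : G →L[ℂ] F).le_opNorm (e (f x))
  calc ‖dbar A (fun y ↦ e (f y)) x‖
      = ‖((e : F →L[ℂ] G).restrictScalars ℝ).comp (dbar A f x)‖ :=
        congrArg norm (dbar_continuousLinearMap_comp A (e : F →L[ℂ] G) hf)
    _ ≤ ‖(e : F →L[ℂ] G)‖ * ‖dbar A f x‖ := by
        simpa using ((e : F →L[ℂ] G).restrictScalars ℝ).opNorm_comp_le (dbar A f x)
    _ ≤ ‖(e : F →L[ℂ] G)‖ * (|C| * (‖(e.symm : G →L[ℂ] F)‖ * ‖e (f x)‖)) := by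
        gcongr
        exact hbound.trans (mul_le_mul (le_abs_self C) hinv (norm_nonneg _) (abs_nonneg C))
    _ = ‖(e : F →L[ℂ] G)‖ * (|C| * ‖(e.symm : G →L[ℂ] F)‖) * ‖e (f x)‖ := by ring

end Comp

variable [FiniteDimensional ℝ E]

lemma exists_contDiff_eq_one_on_euclidean_ball (z : E) {r R : ℝ} (hr : 0 < r) (hrR : r < R) :
    ∃ χ : E → ℝ, ContDiff ℝ ∞ χ ∧ (∀ x ∈ Euclidean.ball z r, χ x = 1) ∧
      (∀ x ∉ Euclidean.ball z R, χ x = 0) := by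
  let b : ContDiffBump (toEuclidean z) := ⟨r, R, hr, hrR⟩
  have hb : ContDiff ℝ ∞ fun x : E ↦ b (toEuclidean x) := b.contDiff.comp toEuclidean.contDiff
  refine ⟨fun x ↦ b (toEuclidean x), hb, fun x hx ↦ ?_, fun x hx ↦ ?_⟩
  · have hdist : dist (toEuclidean x) (toEuclidean z) ≤ b.rIn := le_of_lt hx
    exact b.one_of_mem_closedBall hdist
  · have hdist : b.rOut ≤ dist (toEuclidean x) (toEuclidean z) := not_lt.1 hx
    exact b.zero_of_le_dist hdist

lemma contDiff_euclidean_dist_sq (z : E) {n : WithTop ℕ∞} :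
    ContDiff ℝ n fun x ↦ Euclidean.dist x z ^ 2 := by
  simp only [Euclidean.dist, dist_eq_norm]
  exact (toEuclidean.contDiff.sub contDiff_const).norm_sq ℝ

lemma fderiv_euclidean_dist_sq_ne_zero {x z : E} (hxz : x ≠ z) :
    fderiv ℝ (fun y ↦ Euclidean.dist y z ^ 2) x ≠ 0 := by
  intro h
  have hderiv := (((toEuclidean (E := E)).hasFDerivAt (x := x)).sub_const (toEuclidean z)).norm_sq
  simp only [Euclidean.dist, dist_eq_norm, hderiv.fderiv] at h
  simpa [← map_sub, sub_eq_zero, hxz] using DFunLike.congr_fun h (x - z)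

variable [FiniteDimensional ℂ F] {A : E → E →L[ℝ] E} {f : E → F} {C : ℝ}

lemma eq_zero_of_norm_dbar_le_of_lt (hA : ContDiff ℝ 1 A) {K : Set E} (hK : IsCompact K)
    {ψ : E → ℝ} (hψ : ContDiff ℝ 2 ψ) (hdψ : ∀ x ∈ K, fderiv ℝ ψ x ≠ 0) (hf : ContDiff ℝ 2 f)
    (hfK : ∀ x ∉ K, f x = 0) {t : ℝ} (hbound : ∀ x, t < ψ x → ‖dbar A f x‖ ≤ C * ‖f x‖) {x : E}
    (hx : t < ψ x) : f x = 0 := by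
  let e : F ≃L[ℂ] EuclideanSpace ℂ (Fin (finrank ℂ F)) :=
    .ofFinrankEq finrank_euclideanSpace_fin.symm
  have hef : ContDiff ℝ 2 fun y ↦ e (f y) :=
    ContDiff.comp (g := e) (e.toContinuousLinearMap.restrictScalars ℝ).contDiff hf
  exact e.map_eq_zero_iff.1 <| eq_zero_of_norm_dbar_le_of_lt_of_inner hA hK hψ hdψ hef
    (fun y hy ↦ by simp [hfK y hy]) (fun y hy ↦ norm_dbar_continuousLinearEquiv_comp_le e
      (hf.differentiable two_ne_zero y) (hbound y hy)) hx

variable {U : Set E}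

/-- The Carleman weight is a function of the squared distance to `z`, whose only critical point
lies in the region where `f` is already known to vanish. -/
lemma eq_zero_on_euclidean_ball_of_norm_dbar_le (hU : IsOpen U) (hA : ContDiffOn ℝ 1 A U)
    (hf : ContDiffOn ℝ 2 f U) (hbound : ∀ x ∈ U, ‖dbar A f x‖ ≤ C * ‖f x‖) {z : E} {R : ℝ}
    (hR : Euclidean.closedBall z R ⊆ U) (hz : ∀ᶠ x in 𝓝 z, f x = 0) {x : E}
    (hx : x ∈ Euclidean.ball z R) : f x = 0 := by
  obtain ⟨r, hr, hrz⟩ := Euclidean.nhds_basis_ball.mem_iff.1 hz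
  obtain ⟨t, hxt, htR⟩ := exists_between (show Euclidean.dist x z < R from hx)
  have ht : 0 < t := dist_nonneg.trans_lt hxt
  obtain ⟨χ, hχ, hχ_one, hχ_zero⟩ := exists_contDiff_eq_one_on_euclidean_ball z ht htR
  have hχU : tsupport χ ⊆ U := (closure_minimal (support_subset_iff'.2 fun y hy ↦
    hχ_zero y fun h ↦ hy (Euclidean.ball_subset_closedBall h)) Euclidean.isClosed_closedBall).trans
    hR
  let K := Euclidean.closedBall z R \ Euclidean.ball z r
  have hK : IsCompact K := Euclidean.isCompact_closedBall.diff Euclidean.isOpen_ball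
  have hsub : ∀ y, -t ^ 2 < -Euclidean.dist y z ^ 2 → y ∈ Euclidean.ball z t := fun y hy ↦
    lt_of_pow_lt_pow_left₀ 2 ht.le (neg_lt_neg_iff.1 hy)
  have hχf : χ x • f x = 0 := by
    refine eq_zero_of_norm_dbar_le_of_lt (A := fun y ↦ χ y • A y) (K := K) (C := C) (t := -t ^ 2)
      (ψ := fun y ↦ -Euclidean.dist y z ^ 2) (f := fun y ↦ χ y • f y)
      (contDiff_smul_of_contDiffOn hU (contDiff_infty.1 hχ 1) hχU hA) hK
      (contDiff_euclidean_dist_sq z).neg (fun y hy ↦ ?_)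
      (contDiff_smul_of_contDiffOn hU (contDiff_infty.1 hχ 2) hχU hf) (fun y hy ↦ ?_)
      (fun y hy ↦ ?_) ?_
    · rw [fderiv_fun_neg, neg_ne_zero]
      exact fderiv_euclidean_dist_sq_ne_zero fun h ↦ hy.2 (h ▸ Euclidean.mem_ball_self hr)
    · by_cases hyr : y ∈ Euclidean.ball z r
      · rw [hrz hyr, smul_zero]
      · rw [hχ_zero y fun h ↦ hy ⟨Euclidean.ball_subset_closedBall h, hyr⟩, zero_smul]
    · have hyt := hsub y hy
      have hfderiv : fderiv ℝ (fun y ↦ χ y • f y) y = fderiv ℝ f y := EventuallyEq.fderiv_eq <| by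
        filter_upwards [Euclidean.isOpen_ball.mem_nhds hyt] with w hw
        rw [hχ_one w hw, one_smul]
      have hyU : y ∈ U := hR (Euclidean.ball_subset_closedBall (lt_trans hyt htR))
      simpa only [dbar, hfderiv, hχ_one y hyt, one_smul] using hbound y hyU
    · exact neg_lt_neg (pow_lt_pow_left₀ hxt dist_nonneg two_ne_zero)
  simpa [hχ_one x hxt] using hχf

theorem eq_zero_of_norm_dbar_le (hU : IsOpen U) (hconn : IsPreconnected U)
    (hA : ContDiffOn ℝ 1 A U) (hf : ContDiffOn ℝ 2 f U)
    (hbound : ∀ x ∈ U, ∃ C, ∀ᶠ y in 𝓝 x, ‖dbar A f y‖ ≤ C * ‖f y‖) {v : E} (hv : v ∈ U)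
    (hfv : ∀ᶠ x in 𝓝 v, f x = 0) : ∀ x ∈ U, f x = 0 := by
  suffices hsub : U ⊆ {x | ∀ᶠ y in 𝓝 x, f y = 0} from fun x hx ↦ (hsub hx).self_of_nhds
  refine hconn.subset_of_closure_inter_subset isOpen_setOfPred_eventually_nhds ⟨v, hv, hfv⟩ ?_
  rintro x ⟨hx_closure, hx⟩
  obtain ⟨C, hC⟩ := hbound x hx
  obtain ⟨W, hWsub, hW, hxW⟩ := _root_.mem_nhds_iff.1 (hC.and (hU.mem_nhds hx))
  obtain ⟨R, hR, hRW⟩ := Euclidean.nhds_basis_closedBall.mem_iff.1 (hW.mem_nhds hxW)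
  obtain ⟨z, hzx, hz⟩ := mem_closure_iff_nhds.1 hx_closure _
    (Euclidean.ball_mem_nhds (x := x) (half_pos hR))
  have hzW : Euclidean.closedBall z (R / 2) ⊆ W := fun y hy ↦ hRW <|
    (dist_triangle _ _ _).trans ((add_le_add hy hzx.le).trans_eq (add_halves R))
  have hxz : x ∈ Euclidean.ball z (R / 2) := (dist_comm _ _).trans_lt hzx
  filter_upwards [Euclidean.isOpen_ball.mem_nhds hxz] with y hy
  exact eq_zero_on_euclidean_ball_of_norm_dbar_le hW (hA.mono fun w hw ↦ (hWsub hw).2)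
    (hf.mono fun w hw ↦ (hWsub hw).2) (fun w hw ↦ (hWsub hw).1) hzW hz hy

end UniqueContinuation

section TrilinearForms

variable {E : Type*} [NormedAddCommGroup E] [NormedSpace ℝ E]
variable {J : E →L[ℝ] E} {β : E →L[ℝ] E →L[ℝ] E →L[ℝ] ℝ}

/-- The failure of the forms `β W` to satisfy `β W (J X) Y = β W X (J Y)`, the equation expressing
anti-invariance under an almost complex structure `J`. -/
noncomputable def antiInvarianceDefect (J : E →L[ℝ] E) (β : E →L[ℝ] E →L[ℝ] E →L[ℝ] ℝ)
    (W X Y : E) : ℝ :=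
  β W (J X) Y - β W X (J Y)

lemma add_apply_apply_add_eq_antiInvarianceDefect (hJ : ∀ X, J (J X) = -X)
    (hskew : ∀ W X Y, β W X Y = -β W Y X)
    (hclosed : ∀ X Y Z, β X Y Z - β Y X Z + β Z X Y = 0) (X Y Z : E) :
    (β X Y Z + β (J X) (J Y) Z) + (β Y Z X + β (J Y) (J Z) X) =
      antiInvarianceDefect J β (J Y) Z X - antiInvarianceDefect J β Z X (J Y) := by
  simp only [antiInvarianceDefect, hJ, map_neg]
  linear_combination hclosed X Y Z + hclosed (J X) (J Y) Z + hskew Y X Z + hskew (J Y) (J X) Z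

lemma two_mul_add_apply_apply_eq_antiInvarianceDefect (hJ : ∀ X, J (J X) = -X)
    (hskew : ∀ W X Y, β W X Y = -β W Y X)
    (hclosed : ∀ X Y Z, β X Y Z - β Y X Z + β Z X Y = 0) (X Y Z : E) :
    2 * (β X Y Z + β (J X) (J Y) Z) =
      (antiInvarianceDefect J β (J Y) Z X - antiInvarianceDefect J β Z X (J Y)) -
      (antiInvarianceDefect J β (J Z) X Y - antiInvarianceDefect J β X Y (J Z)) +
      (antiInvarianceDefect J β (J X) Y Z - antiInvarianceDefect J β Y Z (J X)) := by
  have hcyclic := add_apply_apply_add_eq_antiInvarianceDefect hJ hskew hclosed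
  linear_combination hcyclic X Y Z - hcyclic Y Z X + hcyclic Z X Y

lemma abs_add_apply_apply_le (hJ : ∀ X, J (J X) = -X) (hskew : ∀ W X Y, β W X Y = -β W Y X)
    (hclosed : ∀ X Y Z, β X Y Z - β Y X Z + β Z X Y = 0) {C : ℝ} (hC : 0 ≤ C)
    (hdefect : ∀ W X Y, |antiInvarianceDefect J β W X Y| ≤ C * ‖W‖ * ‖X‖ * ‖Y‖) (X Y Z : E) :
    |β X Y Z + β (J X) (J Y) Z| ≤ 3 * C * ‖J‖ * ‖X‖ * ‖Y‖ * ‖Z‖ := by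
  have hfirst (P Q R : E) :
      |antiInvarianceDefect J β (J P) Q R| ≤ C * (‖J‖ * ‖P‖) * ‖Q‖ * ‖R‖ := by
    grw [hdefect, J.le_opNorm P]
  have hlast (P Q R : E) :
      |antiInvarianceDefect J β P Q (J R)| ≤ C * ‖P‖ * ‖Q‖ * (‖J‖ * ‖R‖) := by
    grw [hdefect, J.le_opNorm R]
  have hsum := two_mul_add_apply_apply_eq_antiInvarianceDefect hJ hskew hclosed X Y Z
  simp only [abs_le] at hfirst hlast ⊢
  constructor <;>
    linarith [hfirst Y Z X, hlast Z X Y, hfirst Z X Y, hlast X Y Z, hfirst X Y Z, hlast Y Z X]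

end TrilinearForms

section AntiInvariantForms

variable {E : Type*} [NormedAddCommGroup E] [NormedSpace ℝ E]

lemma fderiv_apply_apply {G : Type*} [NormedAddCommGroup G] [NormedSpace ℝ G]
    {β : E → E →L[ℝ] E →L[ℝ] G} {u v : E → E} {x : E} (hβ : DifferentiableAt ℝ β x)
    (hu : DifferentiableAt ℝ u x) (hv : DifferentiableAt ℝ v x) (W : E) :
    fderiv ℝ (fun y ↦ β y (u y) (v y)) x W = fderiv ℝ β x W (u x) (v x) +
      β x (fderiv ℝ u x W) (v x) + β x (u x) (fderiv ℝ v x W) := by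
  rw [((hβ.hasFDerivAt.clm_apply hu.hasFDerivAt).clm_apply hv.hasFDerivAt).fderiv]
  simp
  abel

variable {J : E → E →L[ℝ] E} {α : E → E →L[ℝ] E →L[ℝ] ℝ} {x : E}

lemma fderiv_apply_apply_eq_neg (hα : DifferentiableAt ℝ α x)
    (halt : ∀ᶠ y in 𝓝 x, ∀ X, α y X X = 0) (W X Y : E) :
    fderiv ℝ α x W X Y = -fderiv ℝ α x W Y X := by
  have hdiag (X : E) : fderiv ℝ α x W X X = 0 := by
    have hzero : (fun y ↦ α y X X) =ᶠ[𝓝 x] fun _ ↦ 0 := halt.mono fun y hy ↦ hy X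
    have hderiv :=
      fderiv_apply_apply hα (differentiableAt_const X) (differentiableAt_const X) W
    simpa [hzero.fderiv_eq] using hderiv.symm
  have hpolar := hdiag (X + Y)
  simp only [map_add, add_apply, hdiag, zero_add, add_zero] at hpolar
  linarith

lemma antiInvarianceDefect_fderiv (hJ : DifferentiableAt ℝ J x) (hα : DifferentiableAt ℝ α x)
    (hanti : ∀ᶠ y in 𝓝 x, ∀ X Y, α y (J y X) Y = α y X (J y Y)) (W X Y : E) :
    antiInvarianceDefect (J x) (fderiv ℝ α x) W X Y =
      α x X (fderiv ℝ J x W Y) - α x (fderiv ℝ J x W X) Y := by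
  have hJapply (X : E) : DifferentiableAt ℝ (fun y ↦ J y X) x :=
    hJ.clm_apply (differentiableAt_const X)
  have hdJ (X : E) : fderiv ℝ (fun y ↦ J y X) x W = fderiv ℝ J x W X := by
    simp [fderiv_clm_apply hJ (differentiableAt_const X)]
  have heq : (fun y ↦ α y (J y X) Y) =ᶠ[𝓝 x] fun y ↦ α y X (J y Y) := hanti.mono fun y hy ↦ hy X Y
  have hderiv := DFunLike.congr_fun (heq.fderiv_eq (𝕜 := ℝ)) W
  simp only [fderiv_apply_apply hα (hJapply X) (differentiableAt_const Y),
    fderiv_apply_apply hα (differentiableAt_const X) (hJapply Y), hdJ, fderiv_fun_const,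
    Pi.zero_apply, zero_apply, map_zero, add_zero] at hderiv
  rw [antiInvarianceDefect]
  linarith

lemma abs_antiInvarianceDefect_fderiv_le (hJ : DifferentiableAt ℝ J x)
    (hα : DifferentiableAt ℝ α x)
    (hanti : ∀ᶠ y in 𝓝 x, ∀ X Y, α y (J y X) Y = α y X (J y Y)) (W X Y : E) :
    |antiInvarianceDefect (J x) (fderiv ℝ α x) W X Y| ≤
      2 * ‖α x‖ * ‖fderiv ℝ J x‖ * ‖W‖ * ‖X‖ * ‖Y‖ := by
  have hdJ (X : E) : ‖fderiv ℝ J x W X‖ ≤ ‖fderiv ℝ J x‖ * ‖W‖ * ‖X‖ :=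
    (fderiv ℝ J x).le_opNorm₂ W X
  rw [antiInvarianceDefect_fderiv hJ hα hanti]
  calc |α x X (fderiv ℝ J x W Y) - α x (fderiv ℝ J x W X) Y|
      ≤ ‖α x X (fderiv ℝ J x W Y)‖ + ‖α x (fderiv ℝ J x W X) Y‖ := abs_sub _ _
    _ ≤ ‖α x‖ * ‖X‖ * (‖fderiv ℝ J x‖ * ‖W‖ * ‖Y‖) +
        ‖α x‖ * (‖fderiv ℝ J x‖ * ‖W‖ * ‖X‖) * ‖Y‖ := by
      grw [(α x).le_opNorm₂, (α x).le_opNorm₂, hdJ, hdJ]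
    _ = 2 * ‖α x‖ * ‖fderiv ℝ J x‖ * ‖W‖ * ‖X‖ * ‖Y‖ := by ring

/-- The complex-valued form `α - i α(J·, ·)` associated with a bilinear form `α`. If `α` is
`J`-anti-invariant, it is the form of type `(2, 0)` with real part `α`. -/
noncomputable def complexification (J : E → E →L[ℝ] E) (α : E → E →L[ℝ] E →L[ℝ] ℝ) (x : E) :
    E →L[ℝ] E →L[ℝ] ℂ :=
  (ContinuousLinearMap.compL ℝ E ℝ ℂ ofRealCLM).comp (α x) -
    (ContinuousLinearMap.compL ℝ E ℝ ℂ (I • ofRealCLM)).comp ((α x).comp (J x))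

lemma complexification_apply (x X Y : E) :
    complexification J α x X Y = α x X Y - I * α x (J x X) Y := by
  simp [complexification]

lemma complexification_eq_zero_iff : complexification J α x = 0 ↔ α x = 0 := by
  refine ⟨fun h ↦ ?_, fun h ↦ by simp [complexification, h]⟩
  ext X Y
  simpa [complexification_apply] using congrArg re (DFunLike.congr_fun (DFunLike.congr_fun h X) Y)

lemma norm_le_norm_complexification (J : E → E →L[ℝ] E) (α : E → E →L[ℝ] E →L[ℝ] ℝ) (x : E) :
    ‖α x‖ ≤ ‖complexification J α x‖ := by
  refine (α x).opNorm_le_bound₂ (norm_nonneg (complexification J α x)) fun X Y ↦ ?_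
  calc ‖α x X Y‖ = |(complexification J α x X Y).re| := by simp [complexification_apply]
    _ ≤ ‖complexification J α x X Y‖ := abs_re_le_norm _
    _ ≤ ‖complexification J α x‖ * ‖X‖ * ‖Y‖ := (complexification J α x).le_opNorm₂ X Y

lemma contDiffOn_complexification {n : WithTop ℕ∞} {U : Set E} (hJ : ContDiffOn ℝ n J U)
    (hα : ContDiffOn ℝ n α U) : ContDiffOn ℝ n (complexification J α) U :=
  (contDiffOn_const.clm_comp hα).sub (contDiffOn_const.clm_comp (hα.clm_comp hJ))

lemma differentiableAt_complexification (hJ : DifferentiableAt ℝ J x)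
    (hα : DifferentiableAt ℝ α x) : DifferentiableAt ℝ (complexification J α) x :=
  DifferentiableAt.fun_sub (𝕜 := ℝ) (E := E) (F := E →L[ℝ] E →L[ℝ] ℂ)
    ((differentiableAt_const _).clm_comp hα)
    ((differentiableAt_const _).clm_comp (hα.clm_comp hJ))

lemma fderiv_complexification_apply (hJ : DifferentiableAt ℝ J x) (hα : DifferentiableAt ℝ α x)
    (Z X Y : E) :
    fderiv ℝ (complexification J α) x Z X Y = fderiv ℝ α x Z X Y -
      I * (fderiv ℝ α x Z (J x X) Y + α x (fderiv ℝ J x Z X) Y : ℝ) := by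
  have hX : DifferentiableAt ℝ (fun _ : E ↦ X) x := differentiableAt_const X
  have hY : DifferentiableAt ℝ (fun _ : E ↦ Y) x := differentiableAt_const Y
  have hJX : DifferentiableAt ℝ (fun y ↦ J y X) x := hJ.clm_apply hX
  have hdJX : fderiv ℝ (fun y ↦ J y X) x Z = fderiv ℝ J x Z X := by
    simp [fderiv_clm_apply hJ hX]
  have hre : DifferentiableAt ℝ (fun y ↦ α y X Y) x := (hα.clm_apply hX).clm_apply hY
  have him : DifferentiableAt ℝ (fun y ↦ α y (J y X) Y) x := (hα.clm_apply hJX).clm_apply hY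
  have hparts : fderiv ℝ (fun y ↦ complexification J α y X Y) x Z =
      fderiv ℝ (fun y ↦ α y X Y) x Z - I * fderiv ℝ (fun y ↦ α y (J y X) Y) x Z := by
    have hderiv := (ofRealCLM.hasFDerivAt.comp x hre.hasFDerivAt).fun_sub
      ((ofRealCLM.hasFDerivAt.comp x him.hasFDerivAt).const_mul I)
    simpa [← complexification_apply] using DFunLike.congr_fun hderiv.fderiv Z
  have hΦ := fderiv_apply_apply (differentiableAt_complexification hJ hα) hX hY Z
  simpa [hparts, fderiv_apply_apply hα hX hY, fderiv_apply_apply hα hJX hY, hdJX] using hΦ.symm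

lemma dbar_complexification_apply (hJ : DifferentiableAt ℝ J x) (hα : DifferentiableAt ℝ α x)
    (Z X Y : E) :
    dbar J (complexification J α) x Z X Y =
      (fderiv ℝ α x Z X Y + fderiv ℝ α x (J x Z) (J x X) Y + α x (fderiv ℝ J x (J x Z) X) Y : ℝ) -
      I * (fderiv ℝ α x Z (J x X) Y - fderiv ℝ α x (J x Z) X Y + α x (fderiv ℝ J x Z X) Y : ℝ) := by
  rw [dbar_apply]
  simp only [add_apply, smul_apply, smul_eq_mul, fderiv_complexification_apply hJ hα]
  push_cast
  linear_combination
    -(fderiv ℝ α x (J x Z) (J x X) Y + α x (fderiv ℝ J x (J x Z) X) Y : ℂ) * I_sq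

lemma norm_dbar_complexification_le (hJ : DifferentiableAt ℝ J x) (hα : DifferentiableAt ℝ α x)
    (hJsq : ∀ X, J x (J x X) = -X) (halt : ∀ᶠ y in 𝓝 x, ∀ X, α y X X = 0)
    (hanti : ∀ᶠ y in 𝓝 x, ∀ X Y, α y (J y X) Y = α y X (J y Y))
    (hclosed : ∀ X Y Z, fderiv ℝ α x X Y Z - fderiv ℝ α x Y X Z + fderiv ℝ α x Z X Y = 0) :
    ‖dbar J (complexification J α) x‖ ≤
      (1 + 7 * ‖J x‖ + 6 * ‖J x‖ ^ 2) * ‖fderiv ℝ J x‖ * ‖complexification J α x‖ := by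
  have htype (Z X Y : E) :
      |fderiv ℝ α x Z X Y + fderiv ℝ α x (J x Z) (J x X) Y| ≤
        6 * ‖α x‖ * ‖fderiv ℝ J x‖ * ‖J x‖ * ‖Z‖ * ‖X‖ * ‖Y‖ :=
    (abs_add_apply_apply_le hJsq (fderiv_apply_apply_eq_neg hα halt) hclosed (by positivity)
      (abs_antiInvarianceDefect_fderiv_le hJ hα hanti) Z X Y).trans_eq (by ring)
  have htypeJ (Z X Y : E) :
      |fderiv ℝ α x Z (J x X) Y - fderiv ℝ α x (J x Z) X Y| ≤
        6 * ‖α x‖ * ‖fderiv ℝ J x‖ * ‖J x‖ ^ 2 * ‖Z‖ * ‖X‖ * ‖Y‖ := by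
    have h := htype Z (J x X) Y
    simp only [hJsq, map_neg, neg_apply, ← sub_eq_add_neg] at h
    grw [h, (J x).le_opNorm X]
    exact le_of_eq (by ring)
  have hdJ (Z X Y : E) :
      |α x (fderiv ℝ J x Z X) Y| ≤ ‖α x‖ * ‖fderiv ℝ J x‖ * ‖Z‖ * ‖X‖ * ‖Y‖ := by
    grw [← Real.norm_eq_abs, (α x).le_opNorm₂, (fderiv ℝ J x).le_opNorm₂]
    exact le_of_eq (by ring)
  have hdJJ (Z X Y : E) :
      |α x (fderiv ℝ J x (J x Z) X) Y| ≤ ‖α x‖ * ‖fderiv ℝ J x‖ * ‖J x‖ * ‖Z‖ * ‖X‖ * ‖Y‖ := by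
    grw [hdJ, (J x).le_opNorm Z]
    exact le_of_eq (by ring)
  refine ContinuousLinearMap.opNorm_le_bound _ (by positivity) fun Z ↦
    ContinuousLinearMap.opNorm_le_bound₂ _ (by positivity) fun X Y ↦ ?_
  rw [dbar_complexification_apply hJ hα]
  grw [← norm_le_norm_complexification, norm_sub_le, norm_mul, norm_I, one_mul, norm_real,
    norm_real, norm_add_le, norm_add_le (_ - _)]
  simp only [Real.norm_eq_abs]
  linarith [htype Z X Y, htypeJ Z X Y, hdJ Z X Y, hdJJ Z X Y]

lemma exists_eventually_norm_dbar_complexification_le {U : Set E} (hU : IsOpen U)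
    (hJ : ContDiffOn ℝ 1 J U) (hJsq : ∀ x ∈ U, ∀ X, J x (J x X) = -X)
    (hα : DifferentiableOn ℝ α U) (halt : ∀ x ∈ U, ∀ X, α x X X = 0)
    (hanti : ∀ x ∈ U, ∀ X Y, α x (J x X) (J x Y) = -α x X Y)
    (hclosed : ∀ x ∈ U, ∀ X Y Z,
      fderiv ℝ α x X Y Z - fderiv ℝ α x Y X Z + fderiv ℝ α x Z X Y = 0) (hx : x ∈ U) :
    ∃ C, ∀ᶠ y in 𝓝 x, ‖dbar J (complexification J α) y‖ ≤ C * ‖complexification J α y‖ := by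
  have hswap : ∀ y ∈ U, ∀ X Y, α y (J y X) Y = α y X (J y Y) := fun y hy X Y ↦ by
    simpa [hJsq y hy] using hanti y hy X (J y Y)
  have hJx : ContinuousAt J x := hJ.continuousOn.continuousAt (hU.mem_nhds hx)
  have hdJx : ContinuousAt (fderiv ℝ J) x :=
    (hJ.continuousOn_fderiv_of_isOpen hU le_rfl).continuousAt (hU.mem_nhds hx)
  let c : E → ℝ := fun y ↦ (1 + 7 * ‖J y‖ + 6 * ‖J y‖ ^ 2) * ‖fderiv ℝ J y‖
  have hc : ContinuousAt c x :=
    ((continuousAt_const.add (hJx.norm.const_mul 7)).add ((hJx.norm.pow 2).const_mul 6)).mul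
      (ContinuousAt.norm (E := E →L[ℝ] E →L[ℝ] E) hdJx)
  refine ⟨c x + 1, ?_⟩
  filter_upwards [hU.mem_nhds hx, hc.eventually_le_const (lt_add_one (c x))] with y hy hcy
  have hUy : ∀ᶠ z in 𝓝 y, z ∈ U := hU.mem_nhds hy
  have hJy : DifferentiableAt ℝ J y := (hJ.contDiffAt hUy).differentiableAt one_ne_zero
  grw [norm_dbar_complexification_le hJy (hα.differentiableAt hUy) (hJsq y hy) (hUy.mono halt)
    (hUy.mono hswap) (hclosed y hy), ← hcy]

end AntiInvariantForms

theorem unique_continuation_anti_invariant_form_general {E : Type*} [NormedAddCommGroup E]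
    [NormedSpace ℝ E] [FiniteDimensional ℝ E] {U : Set E} (hU : IsOpen U) (hconn : IsPreconnected U)
    {J : E → E →L[ℝ] E} (hJ : ContDiffOn ℝ 2 J U) (hJsq : ∀ x ∈ U, ∀ X, J x (J x X) = -X)
    {α : E → E →L[ℝ] E →L[ℝ] ℝ} (hα : ContDiffOn ℝ 2 α U) (halt : ∀ x ∈ U, ∀ X, α x X X = 0)
    (hanti : ∀ x ∈ U, ∀ X Y, α x (J x X) (J x Y) = -α x X Y)
    (hclosed : ∀ x ∈ U, ∀ X Y Z,
      fderiv ℝ α x X Y Z - fderiv ℝ α x Y X Z + fderiv ℝ α x Z X Y = 0)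
    (hvan : ∃ x ∈ U, ∀ᶠ y in 𝓝 x, α y = 0) : ∀ x ∈ U, α x = 0 := by
  obtain ⟨v, hvU, hv⟩ := hvan
  have hJ₁ : ContDiffOn ℝ 1 J U := hJ.of_le one_le_two
  have : FiniteDimensional ℂ (E →L[ℝ] E →L[ℝ] ℂ) := Module.Finite.of_restrictScalars_finite ℝ ℂ _
  have hΦ := eq_zero_of_norm_dbar_le hU hconn hJ₁ (contDiffOn_complexification hJ hα)
    (fun x hx ↦ exists_eventually_norm_dbar_complexification_le hU hJ₁ hJsq
      (hα.differentiableOn two_ne_zero) halt hanti hclosed hx)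
    hvU (hv.mono fun y hy ↦ complexification_eq_zero_iff.2 hy)
  exact fun x hx ↦ complexification_eq_zero_iff.1 (hΦ x hx)

/-- local form of Lemma 2.5 of the paper: unique continuation for closed
`J`-anti-invariant 2-forms: if such a form vanishes on a nonempty open subset of a
connected open set `U ⊆ ℂ²`, it vanishes identically on `U`. -/
theorem unique_continuation_anti_invariant_form
    (U : Set (ℂ × ℂ)) (hU : IsOpen U) (hconn : IsConnected U)
    (J : ℂ × ℂ → (ℂ × ℂ →L[ℝ] ℂ × ℂ)) (hJ : IsAlmostComplexOn J U)
    (α : ℂ × ℂ → (ℂ × ℂ →L[ℝ] ℂ × ℂ →L[ℝ] ℝ))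
    (hα : IsTwoFormOn α U) (hαJ : IsJAntiInvariantOn J α U)
    (hαcl : IsClosedTwoFormOn α U)
    (hvan : ∃ V : Set (ℂ × ℂ), IsOpen V ∧ V.Nonempty ∧ V ⊆ U ∧ ∀ x ∈ V, α x = 0) :
    ∀ x ∈ U, α x = 0 := by
  obtain ⟨V, hV, ⟨v, hv⟩, hVU, hzero⟩ := hvan
  exact unique_continuation_anti_invariant_form_general hU hconn.isPreconnected
    (contDiffOn_infty.1 hJ.1 2) hJ.2 (contDiffOn_infty.1 hα.1 2) hα.2 hαJ hαcl
    ⟨v, hVU hv, eventually_of_mem (hV.mem_nhds hv) hzero⟩
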